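/- arXiv:1405.6669 — 3 statements merged into one kernel-verified Lean document; each statement's English description precedes it below -/
import Mathlib

section
/- Let $G$ be a group and let $a_1,\dots,a_k$ ($k \ge 2$) be elements of $G$ satisfying the braid relations, and set $\bar b_i = a_{i+1}^{-1} a_i a_{i+1}$. Then the sequence $(a_{k-1}, a_{k-2}, \dots, a_2, a_1, a_k, a_{k-1}, \dots, a_2, a_1)$ of length $2k-1$ is Hurwitz equivalent to the sequence $(a_k, a_k, \dots, a_k, \bar b_{k-1}, \bar b_{k-2}, \dots, \bar b_2, \bar b_1)$, where $a_k$ is repeated $k$ times. -/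
/-- One elementary (Hurwitz) transformation of sequences in a group. -/
def HurwitzStep {G : Type*} [Group G] (s t : List G) : Prop :=
  ∃ (l₁ l₂ : List G) (x y : G),
    (s = l₁ ++ x :: y :: l₂ ∧ t = l₁ ++ (x * y * x⁻¹) :: x :: l₂) ∨
    (s = l₁ ++ x :: y :: l₂ ∧ t = l₁ ++ y :: (y⁻¹ * x * y) :: l₂)

/-- Hurwitz equivalence: finitely many elementary transformations. -/
def HurwitzEquiv {G : Type*} [Group G] : List G → List G → Prop :=
  Relation.ReflTransGen HurwitzStep

/-- The sequence `a k, a (k-1), …, a m` (descending indices). -/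
def seqDesc {G : Type*} (a : ℕ → G) (k m : ℕ) : List G :=
  (List.range (k + 1 - m)).map fun i => a (k - i)

theorem hw_cons {G : Type*} [Group G] (z : G) {s t : List G} (h : HurwitzEquiv s t) :
    HurwitzEquiv (z :: s) (z :: t) := by
  refine Relation.ReflTransGen.lift (z :: ·) ?_ _ _ h
  rintro s t ⟨l₁, l₂, x, y, h⟩
  refine ⟨z :: l₁, l₂, x, y, ?_⟩
  rcases h with ⟨rfl, rfl⟩ | ⟨rfl, rfl⟩
  · left; simp
  · right; simp

theorem hw_append {G : Type*} [Group G] (l : List G) {s t : List G} (h : HurwitzEquiv s t) :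
    HurwitzEquiv (s ++ l) (t ++ l) := by
  refine Relation.ReflTransGen.lift (· ++ l) ?_ _ _ h
  rintro s t ⟨l₁, l₂, x, y, h⟩
  refine ⟨l₁, l₂ ++ l, x, y, ?_⟩
  rcases h with ⟨rfl, rfl⟩ | ⟨rfl, rfl⟩
  · left; simp
  · right; simp

theorem hw_step {G : Type*} [Group G] (x y z : G) (l : List G) (h : y⁻¹ * x * y = z) :
    HurwitzEquiv (x :: y :: l) (y :: z :: l) := by
  subst h
  exact Relation.ReflTransGen.single ⟨[], l, x, y, Or.inr ⟨rfl, rfl⟩⟩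

theorem hw_move {G : Type*} [Group G] (y : G) (s l : List G) (h : ∀ x ∈ s, x * y = y * x) :
    HurwitzEquiv (s ++ y :: l) (y :: (s ++ l)) := by
  induction s with
  | nil => exact Relation.ReflTransGen.refl
  | cons x s ih =>
    refine (hw_cons x (ih fun z hz => h z (by simp [hz]))).trans ?_
    refine hw_step x y x (s ++ l) ?_
    rw [mul_assoc, h x (by simp), inv_mul_cancel_left]

theorem hw_pow {G : Type*} [Group G] (x y : G) (h : x * y * x = y * x * y) (n : ℕ) (l : List G) :
    HurwitzEquiv (x :: y :: (List.replicate n x ++ l))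
      (List.replicate (n + 1) y ++ (y⁻¹ * x * y) :: l) := by
  induction n with
  | zero => exact hw_step x y _ l rfl
  | succ n ih =>
    refine (hw_step x y _ _ rfl).trans ?_
    refine (hw_cons y ?_).trans (hw_cons y ih)
    refine hw_step (y⁻¹ * x * y) x y _ ?_
    have : y⁻¹ * x * y * x = x * y := by
      rw [mul_assoc, mul_assoc, ← mul_assoc x, h]; group
    rw [mul_assoc, this]; group

theorem seqDesc_succ {G : Type*} (a : ℕ → G) (m : ℕ) :
    seqDesc a (m + 1) 1 = a (m + 1) :: seqDesc a m 1 := by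
  simp [seqDesc, List.range_succ_eq_map, Function.comp_def]

theorem mem_seqDesc {G : Type*} (a : ℕ → G) (m : ℕ) (x : G) (hx : x ∈ seqDesc a m 1) :
    ∃ i, 1 ≤ i ∧ i ≤ m ∧ a i = x := by
  simp only [seqDesc, List.mem_map, List.mem_range] at hx
  obtain ⟨i, hi, rfl⟩ := hx
  exact ⟨m - i, by omega, by omega, rfl⟩

theorem statement3_aux {G : Type*} [Group G] (n : ℕ) (a : ℕ → G)
    (hbraid : ∀ i, 1 ≤ i → i + 1 ≤ n + 1 →
      a i * a (i + 1) * a i = a (i + 1) * a i * a (i + 1))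
    (hcomm : ∀ i j, 1 ≤ i → j ≤ n + 1 → i + 2 ≤ j → a i * a j = a j * a i) :
    HurwitzEquiv (seqDesc a n 1 ++ seqDesc a (n + 1) 1)
      (List.replicate (n + 1) (a (n + 1)) ++
        seqDesc (fun i => (a (i + 1))⁻¹ * a i * a (i + 1)) n 1) := by
  induction n with
  | zero => exact Relation.ReflTransGen.refl
  | succ n ih =>
    have ih' := ih (fun i h1 h2 => hbraid i h1 (by omega))
      (fun i j h1 h2 h3 => hcomm i j h1 (by omega) h3)
    rw [seqDesc_succ a (n + 1), seqDesc_succ (fun i => (a (i + 1))⁻¹ * a i * a (i + 1)) n]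
    nth_rw 1 [seqDesc_succ a n]
    refine Relation.ReflTransGen.trans (hw_cons _ (hw_move (a (n + 1 + 1)) (seqDesc a n 1) _ ?_)) ?_
    · intro x hx
      obtain ⟨i, h1, h2, rfl⟩ := mem_seqDesc a n x hx
      exact hcomm i _ h1 (by omega) (by omega)
    · refine Relation.ReflTransGen.trans (hw_cons _ (hw_cons _ ih')) ?_
      exact hw_pow _ _ (hbraid (n + 1) (by omega) (by omega)) (n + 1) _

theorem statement3 {G : Type*} [Group G] (k : ℕ) (hk : 2 ≤ k) (a : ℕ → G)
    (hbraid : ∀ i, 1 ≤ i → i + 1 ≤ k →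
      a i * a (i + 1) * a i = a (i + 1) * a i * a (i + 1))
    (hcomm : ∀ i j, 1 ≤ i → j ≤ k → i + 2 ≤ j → a i * a j = a j * a i) :
    HurwitzEquiv (seqDesc a (k - 1) 1 ++ seqDesc a k 1)
      (List.replicate k (a k) ++
        seqDesc (fun i => (a (i + 1))⁻¹ * a i * a (i + 1)) (k - 1) 1) := by
  obtain ⟨n, rfl⟩ : ∃ n, k = n + 1 := ⟨k - 1, by omega⟩
  exact statement3_aux n a hbraid hcomm
end

section
/- Let $g \ge 1$ and let $G$ be a group containing elements $c_1,\dots,c_{2g+1}$ satisfying the braid relations. Set $\bar d_j = c_{j+1}^{-1} c_j c_{j+1}$ and $e_{j+1} = c_j c_{j+1} c_j^{-1}$. Then the sequence $(c_1, c_2, \dots, c_{2g+1})$ repeated $2g+2$ times (length $(2g+1)(2g+2)$) is Hurwitz equivalent up to simultaneous conjugation to the $(g+1)$-fold repetition of the block $(\bar d_2, \bar d_4, \dots, \bar d_{2g}, e_2, e_4, \dots, e_{2g}, c_1, c_3, \dots, c_{2g-1}, c_{2g+1}, \dots, c_{2g+1})$, where in each block $c_{2g+1}$ is repeated $g+2$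 times. -/
/-- One move of Hurwitz equivalence up to simultaneous conjugation. -/
def HurwitzStepC {G : Type*} [Group G] (s t : List G) : Prop :=
  HurwitzStep s t ∨ ∃ ψ : G, t = s.map fun w => ψ * w * ψ⁻¹

/-- Hurwitz equivalence up to simultaneous conjugation. -/
def HurwitzEquivC {G : Type*} [Group G] : List G → List G → Prop :=
  Relation.ReflTransGen HurwitzStepC

/-- The sequence `a m, a (m+1), …, a k` (ascending indices). -/
def seqAsc {G : Type*} (a : ℕ → G) (m k : ℕ) : List G :=
  (List.range (k + 1 - m)).map fun i => a (m + i)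

namespace HurwitzAux

/-- Partial products `f 0 * ⋯ * f (k-1)`. -/
def pr {M : Type*} [Monoid M] (f : ℕ → M) : ℕ → M
  | 0 => 1
  | k + 1 => pr f k * f k

lemma pr_eq {M : Type*} [Monoid M] (f : ℕ → M) (k : ℕ) :
    ((List.range k).map f).prod = pr f k := by
  induction k with
  | zero => simp [pr]
  | succ k ih => rw [List.prod_range_succ, ih, pr]

lemma pr_comm {M : Type*} [Monoid M] (f : ℕ → M) (k : ℕ) (z : M)
    (h : ∀ i, i < k → Commute (f i) z) : Commute (pr f k) z := by
  induction k with
  | zero => exact Commute.one_left z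
  | succ k ih => exact (ih fun i hi => h i (by omega)).mul_left (h k (by omega))

lemma core {M : Type*} [Monoid M] (g : ℕ) (r q X Y : ℕ → M)
    (hrr : ∀ i j, i ≤ g → j ≤ g → Commute (r i) (r j))
    (hqr : ∀ i j, i ≤ g → j < g → i ≠ j → i ≠ j + 1 → Commute (r i) (q j))
    (hqq : ∀ i j, i < g → j < g → Commute (q i) (q j))
    (hb1 : ∀ j, j < g → r j * q j * r j = q j * r j * q j)
    (hb2 : ∀ j, j < g → r (j + 1) * q j * r (j + 1) = q j * r (j + 1) * q j)
    (hXY : ∀ j k, j < k → k < g → Commute (X k) (Y j))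
    (ht1 : ∀ j, j < g → X j * Y j * r j = r (j + 1) * (X j * Y j))
    (ht2 : ∀ j, j < g → X j * Y j * r (j + 1) = r j * (X j * Y j))
    (ht3 : ∀ i j, i ≤ g → j < g → i ≠ j → i ≠ j + 1 → Commute (X j * Y j) (r i))
    (hs : ∀ j, j < g → X j * Y j * r j * r j = q j * r j * r (j + 1) * q j) :
    (pr (fun i => r i * q i) g * r g) ^ (2 * g + 2) =
      (pr X g * pr Y g * pr r g * r g ^ (g + 2)) ^ (g + 1) := by
  set τ : ℕ → M := fun j => X j * Y j with hτ
  set σ : ℕ → M := fun j => q j * r j * r (j + 1) * q j with hσ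
  -- the square of the Coxeter word
  have L1 : ∀ k, k ≤ g → (pr (fun i => r i * q i) k * r k) * (pr (fun i => r i * q i) k * r k) =
      pr σ k * r k * r k := by
    intro k
    induction k with
    | zero => intro _; simp [pr]
    | succ k ih =>
      intro hk
      have ih := ih (by omega)
      have c1 : Commute (pr (fun i => r i * q i) k) (r (k + 1)) :=
        pr_comm _ _ _ fun i hi => (hrr i (k + 1) (by omega) hk).mul_left
          (hqr (k + 1) i hk (by omega) (by omega) (by omega)).symm
      have c2 : Commute (pr (fun i => r i * q i) k) (q k) :=
        pr_comm _ _ _ fun i hi => (hqr i k (by omega) (by omega) (by omega) (by omega)).mul_left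
          (hqq i k (by omega) (by omega))
      have c3 := hrr k (k + 1) (by omega) hk
      have b1 := hb1 k (by omega)
      have b2 := hb2 k (by omega)
      simp only [pr, hσ]
      generalize pr (fun i => r i * q i) k = Q at *
      generalize pr σ k = S at *
      generalize r (k + 1) = z at *
      generalize r k = p at *
      generalize q k = q at *
      have hps : p * (q * p * z * q) = q * p * z * q * z := by
        calc p * (q * p * z * q) = (p * q * p) * z * q := by simp only [mul_assoc]
          _ = q * p * (q * z * q) := by rw [b1]; simp only [mul_assoc]
          _ = q * p * z * q * z := by rw [← b2]; simp only [mul_assoc]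
      calc Q * (p * q) * z * (Q * (p * q) * z)
          = Q * p * q * (z * Q) * p * q * z := by simp only [mul_assoc]
        _ = Q * p * q * Q * (z * p) * q * z := by rw [← c1.eq]; simp only [mul_assoc]
        _ = Q * p * (q * Q) * p * (z * q * z) := by rw [← c3.eq]; simp only [mul_assoc]
        _ = Q * p * Q * (q * p * q) * z * q := by rw [← c2.eq, b2]; simp only [mul_assoc]
        _ = (Q * p * (Q * p)) * (q * p * z * q) := by rw [← b1]; simp only [mul_assoc]
        _ = S * p * (p * (q * p * z * q)) := by rw [ih]; simp only [mul_assoc]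
        _ = S * (p * (q * p * z * q)) * z := by
            conv_lhs => rw [hps]
            simp only [mul_assoc]
        _ = S * (q * p * z * q) * z * z := by rw [hps]; simp only [mul_assoc]
  have cR : ∀ k, k ≤ g + 1 → ∀ j, j ≤ g → Commute (pr r k) (r j) := fun k hk j hj =>
    pr_comm _ _ _ fun i hi => hrr i j (by omega) hj
  have L2 : ∀ k, k ≤ g → pr τ k * (pr r k * pr r k) = pr σ k := by
    intro k
    induction k with
    | zero => intro _; simp [pr]
    | succ k ih =>
      intro hk
      have ih := ih (by omega)
      have c1 : Commute (pr r k) (τ k) := pr_comm _ _ _ fun i hi =>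
        (ht3 i k (by omega) (by omega) (by omega) (by omega)).symm
      have c2 := cR k (by omega) k (by omega)
      have h := hs k (by omega)
      have h' : τ k * r k * r k = σ k := h
      simp only [pr]
      rw [← ih, ← h']
      generalize pr r k = R at *
      generalize τ k = t at *
      generalize r k = p at *
      calc pr τ k * t * (R * p * (R * p)) = pr τ k * t * R * (p * R) * p := by
            simp only [mul_assoc]
        _ = pr τ k * (t * (R * R)) * p * p := by rw [← c2.eq]; simp only [mul_assoc]
        _ = pr τ k * (R * R) * (t * p * p) := by
            rw [← (c1.mul_left c1).eq]; simp only [mul_assoc]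
  have L3 : ∀ k, k ≤ g → pr X k * pr Y k = pr τ k := by
    intro k
    induction k with
    | zero => intro _; simp [pr]
    | succ k ih =>
      intro hk
      have c1 : Commute (pr Y k) (X k) := pr_comm _ _ _ fun i hi => (hXY i k hi (by omega)).symm
      simp only [pr]
      rw [← ih (by omega)]
      calc pr X k * X k * (pr Y k * Y k) = pr X k * (X k * pr Y k) * Y k := by
            simp only [mul_assoc]
        _ = pr X k * pr Y k * (X k * Y k) := by rw [← c1.eq]; simp only [mul_assoc]
  have T1 : ∀ k j, k < j → j ≤ g → Commute (pr τ k) (r j) := fun k j hk hj =>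
    pr_comm _ _ _ fun i hi => ht3 j i hj (by omega) (by omega) (by omega)
  have T2 : ∀ k, k ≤ g → pr τ k * r k = r 0 * pr τ k := by
    intro k
    induction k with
    | zero => intro _; simp [pr]
    | succ k ih =>
      intro hk
      have h : τ k * r (k + 1) = r k * τ k := ht2 k (by omega)
      simp only [pr]
      rw [mul_assoc, h, ← mul_assoc, ih (by omega), mul_assoc]
  have T3 : ∀ k, k ≤ g → ∀ j, j < k → pr τ k * r j = r (j + 1) * pr τ k := by
    intro k
    induction k with
    | zero => intro _ j hj; omega
    | succ k ih =>
      intro hk j hj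
      simp only [pr]
      rcases Nat.lt_or_ge j k with h | h
      · have h3 : Commute (τ k) (r j) := ht3 j k (by omega) (by omega) (by omega) (by omega)
        rw [mul_assoc, h3.eq, ← mul_assoc, ih (by omega) j h, mul_assoc]
      · obtain rfl : j = k := by omega
        have h1 : τ j * r j = r (j + 1) * τ j := ht1 j (by omega)
        rw [mul_assoc, h1, ← mul_assoc, (T1 j (j + 1) (by omega) (by omega)).eq, mul_assoc]
  set T := pr τ g with hT
  set R := pr r (g + 1) with hR
  have TR : Commute T R := by
    have e1 : ∀ k, k ≤ g → T * pr r k = pr (fun i => r (i + 1)) k * T := by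
      intro k
      induction k with
      | zero => intro _; simp [pr]
      | succ k ih =>
        intro hk
        simp only [pr]
        rw [← mul_assoc, ih (by omega), mul_assoc, T3 g le_rfl k (by omega), mul_assoc]
    have e2 : ∀ k, pr r (k + 1) = r 0 * pr (fun i => r (i + 1)) k := by
      intro k
      induction k with
      | zero => simp [pr]
      | succ k ih => rw [pr, ih, pr, mul_assoc]
    have e3 : Commute (pr (fun i => r (i + 1)) g) (r 0) :=
      pr_comm _ _ _ fun i hi => hrr (i + 1) 0 (by omega) (by omega)
    show T * R = R * T
    calc T * R = T * pr r g * r g := by rw [hR, pr, mul_assoc]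
      _ = pr (fun i => r (i + 1)) g * (T * r g) := by rw [e1 g le_rfl, mul_assoc]
      _ = pr (fun i => r (i + 1)) g * r 0 * T := by rw [T2 g le_rfl, mul_assoc]
      _ = R * T := by rw [e3.eq, hR, e2]
  set A := T * R with hA
  have cRr : ∀ j, j ≤ g → Commute R (r j) := fun j hj => cR (g + 1) le_rfl j hj
  have A1 : ∀ j, j < g → A * r j = r (j + 1) * A := by
    intro j hj
    rw [hA, mul_assoc, (cRr j hj.le).eq, ← mul_assoc, T3 g le_rfl j hj, mul_assoc]
  have A2 : A * r g = r 0 * A := by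
    rw [hA, mul_assoc, (cRr g le_rfl).eq, ← mul_assoc, T2 g le_rfl, mul_assoc]
  have A3 : ∀ m, m ≤ g → SemiconjBy (A ^ (m + 1)) (r g) (r m) := by
    intro m
    induction m with
    | zero => intro _; rw [zero_add, pow_one]; exact A2
    | succ m ih =>
      intro hm
      rw [pow_succ' A (m + 1)]
      exact SemiconjBy.mul_left (A1 m (by omega)) (ih (by omega))
  have A4 : ∀ m, m ≤ g + 1 →
      (A * r g ^ (g + 1)) ^ m = pr r m ^ (g + 1) * A ^ m := by
    intro m
    induction m with
    | zero => intro _; simp [pr]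
    | succ m ih =>
      intro hm
      have h := (A3 m (by omega)).pow_right (g + 1)
      rw [pow_succ, ih (by omega), pr, (cR m (by omega) m (by omega)).mul_pow, mul_assoc,
        ← mul_assoc (A ^ m), ← pow_succ, h.eq, ← mul_assoc]
  have hB : pr X g * pr Y g * pr r g * r g ^ (g + 2) = A * r g ^ (g + 1) := by
    rw [L3 g le_rfl, hA, hR, pr, pow_succ' (r g) (g + 1)]
    simp only [mul_assoc, hT]
  have hRA : Commute R A := TR.symm.mul_right (Commute.refl R)
  rw [hB, A4 (g + 1) le_rfl, ← hRA.mul_pow, show 2 * g + 2 = 2 * (g + 1) by ring, pow_mul,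
    pow_two, L1 g le_rfl, ← L2 g le_rfl]
  congr 1
  rw [hRA.eq, hA, hR]
  simp only [pr, mul_assoc]
  rw [(cR g (by omega) g le_rfl).symm.left_comm]

/-- The Hurwitz congruence. -/
def hcon (G : Type*) [Group G] : Con (FreeMonoid G) where
  r s t := Relation.ReflTransGen HurwitzStep s.toList t.toList
  iseqv := by
    refine ⟨fun _ => Relation.ReflTransGen.refl, fun h => ?_, fun h1 h2 => h1.trans h2⟩
    refine (@Relation.ReflTransGen.stdSymm _ _ ⟨?_⟩).symm _ _ h
    rintro s t ⟨l₁, l₂, x, y, ⟨rfl, rfl⟩ | ⟨rfl, rfl⟩⟩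
    · exact ⟨l₁, l₂, x * y * x⁻¹, x, Or.inr ⟨rfl, by simp [mul_assoc]⟩⟩
    · exact ⟨l₁, l₂, y, y⁻¹ * x * y, Or.inl ⟨rfl, by simp [mul_assoc]⟩⟩
  mul' := by
    intro a b c d h1 h2
    rw [FreeMonoid.toList_mul, FreeMonoid.toList_mul]
    refine Relation.ReflTransGen.trans
      (Relation.ReflTransGen.lift (fun l => l ++ c.toList) ?_ _ _ h1)
      (Relation.ReflTransGen.lift (fun l => b.toList ++ l) ?_ _ _ h2)
    · rintro s t ⟨l₁, l₂, x, y, h⟩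
      refine ⟨l₁, l₂ ++ c.toList, x, y, ?_⟩
      rcases h with ⟨rfl, rfl⟩ | ⟨rfl, rfl⟩
      · left; simp
      · right; simp
    · rintro s t ⟨l₁, l₂, x, y, h⟩
      refine ⟨b.toList ++ l₁, l₂, x, y, ?_⟩
      rcases h with ⟨rfl, rfl⟩ | ⟨rfl, rfl⟩
      · left; simp
      · right; simp

/-- The class of a letter. -/
def cl {G : Type*} [Group G] (x : G) : (hcon G).Quotient := ((FreeMonoid.of x : FreeMonoid G))

lemma cl_semi {G : Type*} [Group G] {x y z : G} (h : x * y = z * x) :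
    cl x * cl y = cl z * cl x := by
  have hz : z = x * y * x⁻¹ := by rw [h]; simp
  subst hz
  refine (Con.eq (hcon G)).2 ?_
  exact Relation.ReflTransGen.single ⟨[], [], x, y, Or.inl ⟨rfl, rfl⟩⟩

lemma cl_comm {G : Type*} [Group G] {x y : G} (h : x * y = y * x) :
    Commute (cl x) (cl y) := cl_semi h

/-- conjugation by a product of two letters -/
lemma cl_semi2 {G : Type*} [Group G] {u v y z : G} (h : u * v * y = z * (u * v)) :
    cl u * cl v * cl y = cl z * (cl u * cl v) := by
  have h1 : cl v * cl y = cl (v * y * v⁻¹) * cl v := cl_semi (by group)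
  have h2 : cl u * cl (v * y * v⁻¹) = cl z * cl u := cl_semi (by
    rw [← mul_assoc, ← mul_assoc, h]; group)
  rw [mul_assoc, h1, ← mul_assoc, h2, mul_assoc]

lemma cl_braid {G : Type*} [Group G] {x y : G} (h : x * y * x = y * x * y) :
    cl x * cl y * cl x = cl y * cl x * cl y := by
  have h1 : cl x * cl y = cl (x * y * x⁻¹) * cl x := cl_semi (by group)
  have h2 : cl y * cl (x * y * x⁻¹) = cl x * cl y := cl_semi (by
    rw [← mul_assoc, ← mul_assoc, ← h]; group)
  calc cl x * cl y * cl x = cl y * (cl (x * y * x⁻¹) * cl x) := by rw [← h2, mul_assoc]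
    _ = cl y * cl x * cl y := by rw [← h1, mul_assoc]

lemma toHurwitz {G : Type*} [Group G] (s t : List G)
    (h : (s.map cl).prod = (t.map cl).prod) : HurwitzEquivC s t := by
  have key : ∀ l : List G, (l.map cl).prod = ((FreeMonoid.ofList l : FreeMonoid G) :
      (hcon G).Quotient) := by
    intro l
    induction l with
    | nil => rfl
    | cons a l ih =>
      rw [List.map_cons, List.prod_cons, ih, FreeMonoid.ofList_cons]; rfl
  rw [key, key] at h
  have h' : Relation.ReflTransGen HurwitzStep s t := (Con.eq (hcon G)).1 h
  exact Relation.ReflTransGen.mono (fun _ _ hh => Or.inl hh) _ _ h'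

lemma grp1 {G : Type*} [Group G] {p q r : G} (h1 : p * q * p = q * p * q)
    (h2 : q * r * q = r * q * r) (h3 : p * r = r * p) :
    r⁻¹ * q * r * (p * q * p⁻¹) * p = r * (r⁻¹ * q * r * (p * q * p⁻¹)) := by
  have e : r⁻¹ * q * r = q * r * q⁻¹ := by
    rw [eq_mul_inv_iff_mul_eq, mul_assoc, mul_assoc, inv_mul_eq_iff_eq_mul, ← mul_assoc,
      ← mul_assoc, h2]
  have e' : p * q * p⁻¹ = q⁻¹ * p * q := by
    rw [mul_inv_eq_iff_eq_mul, mul_assoc, mul_assoc, eq_inv_mul_iff_mul_eq, ← mul_assoc,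
      ← mul_assoc, h1]
  calc r⁻¹ * q * r * (p * q * p⁻¹) * p = r⁻¹ * q * (r * p) * q := by group
    _ = (r⁻¹ * q * r) * (p * q) := by group
    _ = q * r * q⁻¹ * (p * q) := by rw [e]
    _ = q * r * (q⁻¹ * p * q) := by group
    _ = _ := by rw [← e']; group

lemma grp2 {G : Type*} [Group G] {p q r : G} (h1 : p * q * p = q * p * q)
    (h2 : q * r * q = r * q * r) (h3 : p * r = r * p) :
    r⁻¹ * q * r * (p * q * p⁻¹) * r = p * (r⁻¹ * q * r * (p * q * p⁻¹)) := by
  have c : p⁻¹ * r = r * p⁻¹ := by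
    rw [inv_mul_eq_iff_eq_mul, ← mul_assoc, h3]; group
  have c' : p * r⁻¹ = r⁻¹ * p := by
    rw [mul_inv_eq_iff_eq_mul, mul_assoc, h3]; group
  calc r⁻¹ * q * r * (p * q * p⁻¹) * r = r⁻¹ * q * (r * p) * q * (p⁻¹ * r) := by group
    _ = r⁻¹ * q * p * (r * q * r) * p⁻¹ := by rw [c, ← h3]; group
    _ = r⁻¹ * (q * p * q) * r * q * p⁻¹ := by rw [← h2]; group
    _ = (r⁻¹ * p) * q * (p * r) * q * p⁻¹ := by rw [← h1]; group
    _ = _ := by rw [← c', h3]; group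

end HurwitzAux

open HurwitzAux in
/-- with `d̄ j = (c (j+1))⁻¹ * c j * c (j+1)` and
`e (j+1) = c j * c (j+1) * (c j)⁻¹`, the sequence `(c 1, …, c (2g+1))` repeated `2g+2`
times is Hurwitz equivalent up to simultaneous conjugation to the `(g+1)`-fold repetition
of the block `(d̄ 2, d̄ 4, …, d̄ (2g), e 2, e 4, …, e (2g), c 1, c 3, …, c (2g-1),
(c (2g+1))^{g+2})`. -/
theorem statement13 {G : Type*} [Group G] (g : ℕ) (hg : 1 ≤ g) (c : ℕ → G)
    (hbraid : ∀ i, 1 ≤ i → i + 1 ≤ 2 * g + 1 →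
      c i * c (i + 1) * c i = c (i + 1) * c i * c (i + 1))
    (hcomm : ∀ i j, 1 ≤ i → j ≤ 2 * g + 1 → i + 2 ≤ j → c i * c j = c j * c i) :
    HurwitzEquivC
      ((List.replicate (2 * g + 2) (seqAsc c 1 (2 * g + 1))).flatten)
      ((List.replicate (g + 1)
        (((List.range g).map fun j =>
            (c (2 * j + 3))⁻¹ * c (2 * j + 2) * c (2 * j + 3)) ++
          ((List.range g).map fun j =>
            c (2 * j + 1) * c (2 * j + 2) * (c (2 * j + 1))⁻¹) ++
          ((List.range g).map fun j => c (2 * j + 1)) ++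
          List.replicate (g + 2) (c (2 * g + 1)))).flatten) := by
  have cc : ∀ i j, 1 ≤ i → 1 ≤ j → i ≤ 2 * g + 1 → j ≤ 2 * g + 1 → (i + 2 ≤ j ∨ j + 2 ≤ i ∨ i = j) →
      Commute (c i) (c j) := by
    rintro i j hi hj hi' hj' (h | h | rfl)
    · exact hcomm i j hi hj' h
    · exact (hcomm j i hj hi' h).symm
    · exact Commute.refl _
  have hcore := core g (fun j => cl (c (2 * j + 1))) (fun j => cl (c (2 * j + 2)))
    (fun j => cl ((c (2 * j + 3))⁻¹ * c (2 * j + 2) * c (2 * j + 3)))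
    (fun j => cl (c (2 * j + 1) * c (2 * j + 2) * (c (2 * j + 1))⁻¹))
    (fun i j hi hj => cl_comm (cc _ _ (by omega) (by omega) (by omega) (by omega) (by omega)).eq)
    (fun i j hi hj h1 h2 =>
      cl_comm (cc _ _ (by omega) (by omega) (by omega) (by omega) (by omega)).eq)
    (fun i j hi hj => cl_comm (cc _ _ (by omega) (by omega) (by omega) (by omega) (by omega)).eq)
    (fun j hj => cl_braid (hbraid (2 * j + 1) (by omega) (by omega)))
    (fun j hj => cl_braid (hbraid (2 * j + 2) (by omega) (by omega)).symm)
    (fun j k hjk hk => by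
      have a := fun i (hi : i = 2 * k + 2 ∨ i = 2 * k + 3) l (hl : l = 2 * j + 1 ∨ l = 2 * j + 2) =>
        cc i l (by omega) (by omega) (by omega) (by omega) (by omega)
      have b := fun i (hi : i = 2 * k + 2 ∨ i = 2 * k + 3) =>
        ((a i hi _ (Or.inl rfl)).mul_right (a i hi _ (Or.inr rfl))).mul_right
          (a i hi _ (Or.inl rfl)).inv_right
      exact cl_comm (((b _ (Or.inr rfl)).inv_left.mul_left (b _ (Or.inl rfl))).mul_left
        (b _ (Or.inr rfl))).eq)
    (fun j hj => cl_semi2 (grp1 (hbraid (2 * j + 1) (by omega) (by omega))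
      (hbraid (2 * j + 2) (by omega) (by omega))
      (hcomm (2 * j + 1) (2 * j + 3) (by omega) (by omega) (by omega))))
    (fun j hj => cl_semi2 (grp2 (hbraid (2 * j + 1) (by omega) (by omega))
      (hbraid (2 * j + 2) (by omega) (by omega))
      (hcomm (2 * j + 1) (2 * j + 3) (by omega) (by omega) (by omega))))
    (fun i j hi hj h1 h2 => by
      have a := fun l (hl : l = 2 * j + 1 ∨ l = 2 * j + 2 ∨ l = 2 * j + 3) =>
        cc l (2 * i + 1) (by omega) (by omega) (by omega) (by omega) (by omega)
      have a1 := a _ (Or.inl rfl)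
      have a2 := a _ (Or.inr (Or.inl rfl))
      have a3 := a _ (Or.inr (Or.inr rfl))
      exact (cl_comm ((a3.inv_left.mul_left a2).mul_left a3).eq).mul_left
        (cl_comm ((a1.mul_left a2).mul_left a1.inv_left).eq))
    (fun j hj => by
      have t := cl_semi2 (grp1 (hbraid (2 * j + 1) (by omega) (by omega))
        (hbraid (2 * j + 2) (by omega) (by omega))
        (hcomm (2 * j + 1) (2 * j + 3) (by omega) (by omega) (by omega)))
      have y : cl (c (2 * j + 1)) * cl (c (2 * j + 2)) =
        cl (c (2 * j + 1) * c (2 * j + 2) * (c (2 * j + 1))⁻¹) * cl (c (2 * j + 1)) :=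
        cl_semi (by group)
      have x : cl (c (2 * j + 3)) * cl ((c (2 * j + 3))⁻¹ * c (2 * j + 2) * c (2 * j + 3)) =
        cl (c (2 * j + 2)) * cl (c (2 * j + 3)) :=
        cl_semi (by group)
      have z : Commute (cl (c (2 * j + 1))) (cl (c (2 * j + 3))) :=
        cl_comm (hcomm (2 * j + 1) (2 * j + 3) (by omega) (by omega) (by omega))
      show _ * _ * _ * _ = cl (c (2 * j + 2)) * cl (c (2 * j + 1)) * cl (c (2 * j + 3)) *
        cl (c (2 * j + 2))
      rw [t, mul_assoc, mul_assoc _ _ (cl (c (2 * j + 1))), ← y, ← mul_assoc, x,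
        mul_assoc (cl (c (2 * j + 2))) (cl (c (2 * j + 1))), z.eq]
      simp only [mul_assoc])
  have hδ : ∀ k, ((seqAsc c 1 (2 * k + 1)).map cl).prod =
      pr (fun i => cl (c (2 * i + 1)) * cl (c (2 * i + 2))) k * cl (c (2 * k + 1)) := by
    intro k
    have : ∀ k, ((List.range (2 * k)).map fun i => cl (c (1 + i))).prod =
        pr (fun i => cl (c (2 * i + 1)) * cl (c (2 * i + 2))) k := by
      intro k
      induction k with
      | zero => simp [pr]
      | succ k ih =>
        rw [show 2 * (k + 1) = 2 * k + 1 + 1 by ring, List.prod_range_succ, List.prod_range_succ,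
          ih, pr, mul_assoc, show 1 + 2 * k = 2 * k + 1 by ring,
          show 1 + (2 * k + 1) = 2 * k + 2 by ring]
    rw [seqAsc, List.map_map, show 2 * k + 1 + 1 - 1 = 2 * k + 1 by omega]
    rw [← this k, show 2 * k + 1 = 1 + 2 * k by ring, add_comm 1 (2 * k), ← add_comm 1 (2 * k)]
    rw [add_comm 1 (2 * k), List.prod_range_succ]
    simp [Function.comp_def, add_comm]
  apply toHurwitz
  rw [List.map_flatten, List.map_flatten, List.prod_flatten, List.prod_flatten]
  simp only [List.map_replicate, List.prod_replicate, List.map_append, List.prod_append]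
  rw [hδ]
  simp only [List.map_map, Function.comp_def]
  rw [pr_eq, pr_eq, pr_eq]
  exact hcore
end

section
/- Let $g \ge 3$ and let $G$ be a group containing elements $c_1,\dots,c_{2g+1}$ satisfying the braid relations and elements $x_1,\dots,x_g$ with $x_1 x_2 \cdots x_g = c_1 c_3 c_5 \cdots c_{2g-1} \cdot c_{2g+1}^{g-2}$. Set $\bar d_i = c_{i+1}^{-1} c_i c_{i+1}$ and $e_{i+1} = c_i c_{i+1} c_i^{-1}$, and assume $(c_1 c_2 \cdots c_{2g} c_{2g+1})^{2g+2} = 1$. Then for every integer $k$ with $0 \le k \le g+1$ one has $\big(\bar d_2 \bar d_4 \cdots \bar d_{2g} \cdot e_2 e_4 \cdots e_{2g} \cdot x_1 x_2 \cdots x_g \cdot c_{2g+1}^{4}\big)^{k} \cdot \big(\bar d_2 \bar d_4 \cdots \bar d_{2g} \cdot e_2 e_4 \cdots e_{2g} \cdot c_1 c_3 \cdots c_{2g-1} \cdot c_{2g+1}^{g+2}\big)^{g+1-k} = 1$. -/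
/-- The product `a m * a (m+1) * ⋯ * a k` (ascending indices). -/
def prodAsc {G : Type*} [Group G] (a : ℕ → G) (m k : ℕ) : G :=
  ((List.range (k + 1 - m)).map fun i => a (m + i)).prod

/-- Range products. -/
def rp {G : Type*} [Group G] (f : ℕ → G) (n : ℕ) : G := ((List.range n).map f).prod

theorem rp_zero {G : Type*} [Group G] (f : ℕ → G) : rp f 0 = 1 := by simp [rp]

theorem rp_succ {G : Type*} [Group G] (f : ℕ → G) (n : ℕ) : rp f (n+1) = rp f n * f n := by
  simp [rp, List.range_succ]

theorem rp_comm {G : Type*} [Group G] (f : ℕ → G) (a : G) (n : ℕ)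
    (h : ∀ i < n, Commute a (f i)) : Commute a (rp f n) := by
  induction n with
  | zero => rw [rp_zero]; exact Commute.one_right a
  | succ n ih =>
    rw [rp_succ]
    exact (ih fun i hi => h i (by omega)).mul_right (h n (by omega))

theorem loc_dp {G : Type*} [Group G] (a b d : G) (h1 : a * b * a = b * a * b)
    (h2 : b * d * b = d * b * d) :
    d ^ 2 * ((d⁻¹ * b * d) * (a * b * a⁻¹)) = b * d * a * b := by
  calc d ^ 2 * ((d⁻¹ * b * d) * (a * b * a⁻¹)) = (d * b * d) * a * b * a⁻¹ := by group
    _ = b * d * (b * a * b) * a⁻¹ := by rw [← h2]; group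
    _ = b * d * a * b := by rw [← h1]; group

theorem loc_Xa {G : Type*} [Group G] (a b d : G) (h1 : a * b * a = b * a * b)
    (h2 : b * d * b = d * b * d) :
    (b * d * a * b) * a = d * (b * d * a * b) := by
  calc (b * d * a * b) * a = b * d * (a * b * a) := by group
    _ = (b * d * b) * a * b := by rw [h1]; group
    _ = d * (b * d * a * b) := by rw [h2]; group

theorem loc_pa {G : Type*} [Group G] (a b d : G) (h1 : a * b * a = b * a * b)
    (h2 : b * d * b = d * b * d) :
    ((d⁻¹ * b * d) * (a * b * a⁻¹)) * a = d * ((d⁻¹ * b * d) * (a * b * a⁻¹)) := by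
  have e : (d⁻¹ * b * d) * (a * b * a⁻¹) = (d ^ 2)⁻¹ * (b * d * a * b) := by
    rw [← loc_dp a b d h1 h2]; group
  rw [e, mul_assoc, loc_Xa a b d h1 h2]; group

theorem loc_pd {G : Type*} [Group G] (a b d : G) (h1 : a * b * a = b * a * b)
    (h2 : b * d * b = d * b * d) (h3 : a * d = d * a) :
    ((d⁻¹ * b * d) * (a * b * a⁻¹)) * d = a * ((d⁻¹ * b * d) * (a * b * a⁻¹)) := by
  have e : (d⁻¹ * b * d) * (a * b * a⁻¹) = (d ^ 2)⁻¹ * (b * d * a * b) := by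
    rw [← loc_dp a b d h1 h2]; group
  have hx := loc_Xa d b a h2.symm h1.symm
  have e2 : b * d * a * b = b * a * d * b := by rw [mul_assoc b d a, ← h3]; group
  have h4 : Commute a (d ^ 2)⁻¹ := (Commute.pow_right (show Commute a d from h3) 2).inv_right
  rw [e, e2, mul_assoc, hx, ← mul_assoc, ← h4.eq, mul_assoc]

/-- telescoping of powers -/
theorem pow_tel {G : Type*} [Group G] (P y : G) (f : ℕ → G) (n : ℕ)
    (h : ∀ j < n, P ^ (j+1) * y = f j * P ^ (j+1)) : (P * y) ^ n = rp f n * P ^ n := by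
  induction n with
  | zero => simp [rp_zero]
  | succ n ih =>
    rw [pow_succ, ih fun j hj => h j (by omega), rp_succ, mul_assoc (rp f n) (f n),
      ← h n (by omega), pow_succ]
    group

theorem rp_pow {G : Type*} [Group G] (f : ℕ → G) (m n : ℕ)
    (h : ∀ i j, i < n → j < n → Commute (f i) (f j)) :
    rp (fun i => f i ^ m) n = rp f n ^ m := by
  induction n with
  | zero => simp [rp_zero]
  | succ n ih =>
    rw [rp_succ, rp_succ, ih fun i j hi hj => h i j (by omega) (by omega)]
    have : Commute (rp f n) (f n) :=
      (rp_comm f (f n) n fun i hi => h n i (by omega) (by omega)).symm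
    rw [this.mul_pow]

theorem key {G : Type*} [Group G] (g : ℕ) (c : ℕ → G)
    (hbraid : ∀ i, 1 ≤ i → i + 1 ≤ 2 * g + 1 →
      c i * c (i + 1) * c i = c (i + 1) * c i * c (i + 1))
    (hcomm : ∀ i j, 1 ≤ i → j ≤ 2 * g + 1 → i + 2 ≤ j → c i * c j = c j * c i)
    (hI : (rp (fun i => c (1 + i)) (2 * g + 1)) ^ (2 * g + 2) = 1) :
    (rp (fun j => (c (2 * j + 3))⁻¹ * c (2 * j + 2) * c (2 * j + 3)) g *
      rp (fun j => c (2 * j + 1) * c (2 * j + 2) * (c (2 * j + 1))⁻¹) g *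
      rp (fun j => c (2 * j + 1)) g * (c (2 * g + 1)) ^ (g + 2)) ^ (g + 1) = 1 := by
  have hc : ∀ i j, 1 ≤ i → 1 ≤ j → i ≤ 2 * g + 1 → j ≤ 2 * g + 1 → i + 1 ≠ j → j + 1 ≠ i →
      Commute (c i) (c j) := by
    intro i j hi hj hi' hj' h1 h2
    rcases lt_trichotomy i j with h | h | h
    · exact hcomm i j hi hj' (by omega)
    · rw [h]
    · exact (hcomm j i hj hi' (by omega)).symm
  set d : ℕ → G := fun j => (c (2 * j + 3))⁻¹ * c (2 * j + 2) * c (2 * j + 3) with hd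
  set e : ℕ → G := fun j => c (2 * j + 1) * c (2 * j + 2) * (c (2 * j + 1))⁻¹ with he
  set C : ℕ → G := fun j => c (2 * j + 1) with hC
  set p : ℕ → G := fun j => d j * e j with hp
  have hCC : ∀ i j, i < g + 1 → j < g + 1 → Commute (C i) (C j) := fun i j hi hj =>
    hc _ _ (by omega) (by omega) (by omega) (by omega) (by omega) (by omega)
  have b1 : ∀ j < g, c (2*j+1) * c (2*j+2) * c (2*j+1) = c (2*j+2) * c (2*j+1) * c (2*j+2) :=
    fun j hj => hbraid (2*j+1) (by omega) (by omega)
  have b2 : ∀ j < g, c (2*j+2) * c (2*j+3) * c (2*j+2) = c (2*j+3) * c (2*j+2) * c (2*j+3) :=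
    fun j hj => hbraid (2*j+2) (by omega) (by omega)
  have pa : ∀ j < g, p j * C j = C (j+1) * p j := fun j hj =>
    loc_pa _ _ _ (b1 j hj) (b2 j hj)
  have pd : ∀ j < g, p j * C (j+1) = C j * p j := fun j hj =>
    loc_pd _ _ _ (b1 j hj) (b2 j hj) (hcomm _ _ (by omega) (by omega) (by omega))
  have pc : ∀ j i, j < g → i < g + 1 → i ≠ j → i ≠ j + 1 → Commute (C i) (p j) := by
    intro j i hj hi h1 h2
    have k1 : Commute (C i) (c (2*j+1)) :=
      hc _ _ (by omega) (by omega) (by omega) (by omega) (by omega) (by omega)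
    have k2 : Commute (C i) (c (2*j+2)) :=
      hc _ _ (by omega) (by omega) (by omega) (by omega) (by omega) (by omega)
    have k3 : Commute (C i) (c (2*j+3)) :=
      hc _ _ (by omega) (by omega) (by omega) (by omega) (by omega) (by omega)
    exact ((k3.inv_right.mul_right k2).mul_right k3).mul_right
      ((k1.mul_right k2).mul_right k1.inv_right)
  have de : ∀ i j, i < j → j < g → Commute (d j) (e i) := by
    intro i j hij hj
    have k : ∀ u, 2 * j + 2 ≤ u → u ≤ 2 * j + 3 → Commute (c u) (e i) := by
      intro u hu hu'
      have k1 : Commute (c u) (c (2*i+1)) :=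
        hc _ _ (by omega) (by omega) (by omega) (by omega) (by omega) (by omega)
      have k2 : Commute (c u) (c (2*i+2)) :=
        hc _ _ (by omega) (by omega) (by omega) (by omega) (by omega) (by omega)
      exact (k1.mul_right k2).mul_right k1.inv_right
    have k2 := k (2*j+2) (by omega) (by omega)
    have k3 := k (2*j+3) (by omega) (by omega)
    exact (k3.inv_left.mul_left k2).mul_left k3
  have hDE : ∀ n ≤ g, rp d n * rp e n = rp p n := by
    intro n
    induction n with
    | zero => simp [rp_zero]
    | succ n ih =>
      intro hn
      have k : Commute (d n) (rp e n) := rp_comm _ _ _ fun i hi => de i n hi (by omega)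
      rw [rp_succ, rp_succ, rp_succ, ← ih (by omega)]
      calc rp d n * d n * (rp e n * e n) = rp d n * (d n * rp e n) * e n := by group
        _ = rp d n * rp e n * (d n * e n) := by rw [k.eq]; group
  -- conjugation by the full product
  have hPn : ∀ n ≤ g, (∀ i < n, rp p n * C i = C (i+1) * rp p n) ∧
      rp p n * C n = C 0 * rp p n := by
    intro n
    induction n with
    | zero => intro _; simp [rp_zero]
    | succ n ih =>
      intro hn
      obtain ⟨ih1, ih2⟩ := ih (by omega)
      rw [rp_succ]
      refine ⟨fun i hi => ?_, ?_⟩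
      · rcases Nat.lt_succ_iff_lt_or_eq.mp hi with h | h
        · rw [mul_assoc, ← (pc n i (by omega) (by omega) (by omega) (by omega)).eq, ← mul_assoc,
            ih1 i h, mul_assoc]
        · subst h
          have k : Commute (C (i+1)) (rp p i) := rp_comm _ _ _ fun j hj =>
            pc j (i+1) (by omega) (by omega) (by omega) (by omega)
          rw [mul_assoc, pa i (by omega), ← mul_assoc, ← k.eq, mul_assoc]
      · rw [mul_assoc, pd n (by omega), ← mul_assoc, ih2, mul_assoc]
  obtain ⟨hP1, hP2⟩ := hPn g le_rfl
  -- square of the Coxeter element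
  have hsq : ∀ n ≤ g, rp C (n+1) ^ 2 * rp p n = rp (fun i => c (1 + i)) (2 * n + 1) ^ 2 := by
    intro n
    induction n with
    | zero => intro _; simp [rp_zero, rp_succ, hC]
    | succ n ih =>
      intro hn
      have ih := ih (by omega)
      have k1 : Commute (C (n+1)) (rp C (n+1)) := rp_comm _ _ _ fun j hj =>
        hCC _ _ (by omega) (by omega)
      have k2 : Commute (C (n+1)) (rp p n) := rp_comm _ _ _ fun j hj =>
        pc j (n+1) (by omega) (by omega) (by omega) (by omega)
      have hX : C (n+1) ^ 2 * p n = c (2*n+2) * c (2*n+3) * c (2*n+1) * c (2*n+2) :=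
        loc_dp _ _ _ (b1 n (by omega)) (b2 n (by omega))
      have hXa := loc_Xa _ _ _ (b2 n (by omega)).symm (b1 n (by omega)).symm
      have hac : c (2*n+1) * c (2*n+3) = c (2*n+3) * c (2*n+1) :=
        hcomm _ _ (by omega) (by omega) (by omega)
      have L : rp C (n+1+1) ^ 2 * rp p (n+1) =
          rp (fun i => c (1 + i)) (2 * n + 1) ^ 2 *
            (c (2*n+2) * c (2*n+3) * c (2*n+1) * c (2*n+2)) := by
        rw [rp_succ C (n+1), rp_succ p, k1.symm.mul_pow, ← hX, ← ih]
        have k3 := (k2.pow_left 2).eq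
        calc _ = rp C (n+1) ^ 2 * (C (n+1) ^ 2 * rp p n) * p n := by group
          _ = _ := by rw [k3]; group
      rw [L]
      set A := rp (fun i => c (1 + i)) (2 * n) with hA
      have e1 : rp (fun i => c (1 + i)) (2 * n + 1) = A * c (2*n+1) := by
        rw [rp_succ, add_comm 1 (2*n)]
      have e2 : rp (fun i => c (1 + i)) (2 * (n + 1) + 1) =
          A * c (2*n+1) * c (2*n+2) * c (2*n+3) := by
        rw [show 2 * (n+1) + 1 = 2*n+1+1+1 by ring, rp_succ, rp_succ, e1,
          show 1 + (2*n+1) = 2*n+2 by ring, show 1 + (2*n+1+1) = 2*n+3 by ring]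
      have m2 : Commute (c (2*n+2)) A := rp_comm _ _ _ fun j hj =>
        hc _ _ (by omega) (by omega) (by omega) (by omega) (by omega) (by omega)
      have m3 : Commute (c (2*n+3)) A := rp_comm _ _ _ fun j hj =>
        hc _ _ (by omega) (by omega) (by omega) (by omega) (by omega) (by omega)
      have m : Commute (c (2*n+2) * c (2*n+3)) A := m2.mul_left m3
      rw [e1, e2]
      generalize c (2*n+1) = x at *
      generalize c (2*n+2) = y at *
      generalize c (2*n+3) = z at *
      have hxz : y * z * x * y = y * x * z * y := by rw [mul_assoc y z x, ← hac]; group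
      symm
      calc (A * x * y * z) ^ 2 = A * x * ((y * z) * A) * x * y * z := by rw [pow_two]; group
        _ = A * x * A * ((y * z * x * y) * z) := by rw [m.eq]; group
        _ = A * x * A * (x * (y * x * z * y)) := by rw [hxz, hXa]
        _ = (A * x) ^ 2 * (y * z * x * y) := by rw [← hxz, pow_two]; group
  have hδ := hsq g le_rfl
  rw [hDE g le_rfl]
  set P := rp p g with hPdef
  -- `T` commutes with `P`
  have hpow : ∀ j < g + 1, P ^ (j+1) * C g = C j * P ^ (j+1) := by
    intro j
    induction j with
    | zero => intro _; simpa using hP2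
    | succ j ih =>
      intro hj
      rw [pow_succ' P (j+1), mul_assoc, ih (by omega), ← mul_assoc, hP1 j (by omega), mul_assoc]
  have hTP : Commute (rp C (g+1)) P := by
    have k2 : ∀ n ≤ g, C 0 * (P * rp C n) = rp C (n+1) * P := by
      intro n
      induction n with
      | zero => intro _; simp [rp_zero, rp_succ]
      | succ n ih =>
        intro hn
        rw [rp_succ C n, rp_succ C (n+1), mul_assoc (rp C (n+1)), ← hP1 n (by omega),
          ← mul_assoc (rp C (n+1)), ← ih (by omega)]
        group
    have k3 : Commute (C 0) (rp C (g+1)) := rp_comm _ _ _ fun j hj =>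
      hCC _ _ (by omega) (by omega)
    have k4 : Commute (C g) (rp C g) := rp_comm _ _ _ fun j hj =>
      hCC _ _ (by omega) (by omega)
    have := k2 g le_rfl
    show rp C (g+1) * P = P * rp C (g+1)
    rw [← this, rp_succ, ← k4.eq, ← mul_assoc P, hP2, mul_assoc]
  have hTb : Commute (rp C (g+1)) (C g ^ (g+1)) :=
    (Commute.pow_left (rp_comm C (C g) (g+1) fun j hj => hCC _ _ (by omega) (by omega)) _).symm
  have hB : P * rp C g * c (2*g+1) ^ (g+2) = rp C (g+1) * (P * C g ^ (g+1)) := by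
    rw [← mul_assoc, hTP.eq, rp_succ, show c (2*g+1) = C g from rfl, pow_succ' _ (g+1)]
    group
  have htel : (P * C g ^ (g+1)) ^ (g+1) = rp C (g+1) ^ (g+1) * P ^ (g+1) := by
    rw [← rp_pow C (g+1) (g+1) hCC]
    apply pow_tel
    intro j hj
    have : SemiconjBy (P ^ (j+1)) (C g) (C j) := hpow j hj
    exact (this.pow_right (g+1)).eq
  rw [hB, (hTP.mul_right hTb).mul_pow, htel, ← mul_assoc, ← pow_add,
    show g + 1 + (g + 1) = 2 * (g + 1) by ring, pow_mul, ← (hTP.pow_left 2).mul_pow, hδ,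
    ← pow_mul, show 2 * (g + 1) = 2 * g + 2 by ring, hI]

/-- the monodromy relator of the Lefschetz fibration on `Y(g,k)` of
Theorem 7.1: with `d̄ i = (c (i+1))⁻¹ * c i * c (i+1)` and
`e (i+1) = c i * c (i+1) * (c i)⁻¹`, assuming the braid relations, the daisy relation
`x 1 ⋯ x g = c 1 c 3 ⋯ c (2g-1) · c (2g+1)^{g-2}`, and
`(c 1 c 2 ⋯ c (2g+1))^{2g+2} = 1`, for every `0 ≤ k ≤ g+1` one has
`(d̄ 2 ⋯ d̄ (2g) · e 2 ⋯ e (2g) · x 1 ⋯ x g · c (2g+1)^4)^k ·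
(d̄ 2 ⋯ d̄ (2g) · e 2 ⋯ e (2g) · c 1 c 3 ⋯ c (2g-1) · c (2g+1)^{g+2})^{g+1-k} = 1`. -/
theorem statement19 {G : Type*} [Group G] (g : ℕ) (hg : 3 ≤ g) (c x : ℕ → G)
    (hbraid : ∀ i, 1 ≤ i → i + 1 ≤ 2 * g + 1 →
      c i * c (i + 1) * c i = c (i + 1) * c i * c (i + 1))
    (hcomm : ∀ i j, 1 ≤ i → j ≤ 2 * g + 1 → i + 2 ≤ j → c i * c j = c j * c i)
    (hdaisy : ((List.range g).map fun j => x (j + 1)).prod =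
      ((List.range g).map fun j => c (2 * j + 1)).prod * (c (2 * g + 1)) ^ (g - 2))
    (hI : (prodAsc c 1 (2 * g + 1)) ^ (2 * g + 2) = 1)
    (k : ℕ) (hk : k ≤ g + 1) :
    ((((List.range g).map fun j =>
          (c (2 * j + 3))⁻¹ * c (2 * j + 2) * c (2 * j + 3)).prod) *
        (((List.range g).map fun j =>
          c (2 * j + 1) * c (2 * j + 2) * (c (2 * j + 1))⁻¹).prod) *
        (((List.range g).map fun j => x (j + 1)).prod) *
        (c (2 * g + 1)) ^ 4) ^ k *
      ((((List.range g).map fun j =>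
          (c (2 * j + 3))⁻¹ * c (2 * j + 2) * c (2 * j + 3)).prod) *
        (((List.range g).map fun j =>
          c (2 * j + 1) * c (2 * j + 2) * (c (2 * j + 1))⁻¹).prod) *
        (((List.range g).map fun j => c (2 * j + 1)).prod) *
        (c (2 * g + 1)) ^ (g + 2)) ^ (g + 1 - k) = 1 := by
  have hK := key g c hbraid hcomm (by simpa [prodAsc, rp] using hI)
  have e : ((List.range g).map fun j => x (j + 1)).prod * c (2 * g + 1) ^ 4 =
      ((List.range g).map fun j => c (2 * j + 1)).prod * c (2 * g + 1) ^ (g + 2) := by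
    rw [hdaisy, mul_assoc, ← pow_add, show g - 2 + 4 = g + 2 by omega]
  rw [mul_assoc _ _ (c (2 * g + 1) ^ 4), e, ← mul_assoc, ← pow_add,
    show k + (g + 1 - k) = g + 1 by omega]
  exact hK
end
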